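/- For s ≥ 1, let E(x,y) = Σ e_{n,k} y^k x^n where e_{n,k} is the number of s-ary paths of length n with exactly k exterior down steps. Then E satisfies E = 1 + x·(y·E^s + (1-y)/(1-x))·E as formal power series. Moreover, E(x,y) = P(x·y, y^{-1}) where P is the pyramid-weight generating function. -/

import Mathlib

/-- An `s`-ary path of length `n`, encoded as a list of booleans where `true` is an up
step `(1,1)` and `false` is a (grand) down step `(1,-s)`; the path goes from `(0,0)` to
`((s+1)n, 0)` and never passes below the x-axis. -/
def IsSAryPath (s n : ℕ) (p : List Bool) : Prop :=
  p.length = (s + 1) * n ∧ p.count false = n ∧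
  ∀ i, s * (p.take i).count false ≤ (p.take i).count true

/-- The section of `p` from `a` to `b` (inclusive) is a pyramid `U^{sh} D^h` of height
`h`: `s·h` up steps followed immediately by `h` down steps. -/
def IsPyramidSecS (s : ℕ) (p : List Bool) (a b : ℕ) : Prop :=
  a ≤ b ∧ b < p.length ∧ b - a + 1 = (s + 1) * ((b - a + 1) / (s + 1)) ∧
  (p.drop a).take (b - a + 1) =
    List.replicate (s * ((b - a + 1) / (s + 1))) true ++
      List.replicate ((b - a + 1) / (s + 1)) false

/-- The pyramid section from `a` to `b` is maximal: not contained in a higher pyramid. -/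
def MaximalPyramidSecS (s : ℕ) (p : List Bool) (a b : ℕ) : Prop :=
  IsPyramidSecS s p a b ∧
    ¬ (s ≤ a ∧ b + 1 < p.length ∧ IsPyramidSecS s p (a - s) (b + 1))

open scoped Classical in
/-- The pyramid weight of an `s`-ary path `p`: the sum of the heights of its maximal
pyramids. -/
noncomputable def pyramidWeightS (s : ℕ) (p : List Bool) : ℕ :=
  ∑ q ∈ (Finset.range p.length ×ˢ Finset.range p.length).filter
      (fun q : ℕ × ℕ => MaximalPyramidSecS s p q.1 q.2),
    (q.2 - q.1 + 1) / (s + 1)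

open scoped Classical in
/-- The number of exterior down steps of `p`: down steps belonging to no pyramid. -/
noncomputable def exteriorDownSteps (s : ℕ) (p : List Bool) : ℕ :=
  ((Finset.range p.length).filter
    (fun j => p.getD j true = false ∧
      ¬ ∃ a ∈ Finset.range p.length, ∃ b ∈ Finset.range p.length,
        a ≤ j ∧ j ≤ b ∧ IsPyramidSecS s p a b)).card

open MvPowerSeries in
/-- `Es s = Σ e_{n,k} y^k x^n` where `e_{n,k}` is the number of `s`-ary paths of
length `n` with exactly `k` exterior down steps; `X 0` is `x` and `X 1` is `y`. -/
noncomputable def Es (s : ℕ) : MvPowerSeries (Fin 2) ℚ :=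
  fun d =>
    (Nat.card {p : List Bool // IsSAryPath s (d 0) p ∧ exteriorDownSteps s p = d 1} : ℚ)

/-!
A pyramid is determined by its peak (the position of its first down step) and its height, and the
pyramids with a given peak are nested. Hence every nonexterior down step lies in exactly one maximal
pyramid, so exterior down steps and pyramid weight add up to the length, which is the second claim.

For the functional equation, read exterior down steps from left to right: a down step is exterior
iff the prefix it closes does not end in a pyramid. A proper nonempty suffix of a pyramid dips below
its starting height, so a pyramid cannot straddle the beginning of a nonnegative factor, and
exterior down steps add up over concatenations with nonnegative words. Cutting at last visits, a
nonnegative word ending at height `k` is `u₀ U u₁ U ⋯ U u_k` with `s`-ary paths `uᵢ`, which gives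
the generating function `E ^ (k + 1)`. A nonempty path is uniquely `u · U v D` with `u` a path and
`v` ending at height `s - 1`, and the closing `D` is exterior unless `U v D` is itself a pyramid.
These exceptional `v` have generating function `1 / (1 - x)`, so the factors `U v D` contribute
`x (y (E ^ s - 1 / (1 - x)) + 1 / (1 - x))`.
-/

/-- The word `U^{sh} D^h` of a pyramid of height `h`. -/
def pyramidWord (s h : ℕ) : List Bool :=
  List.replicate (s * h) true ++ List.replicate h false

theorem length_pyramidWord (s h : ℕ) : (pyramidWord s h).length = (s + 1) * h := by
  simp [pyramidWord, add_mul]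

theorem getElem_pyramidWord {s h i : ℕ} (hi : i < (pyramidWord s h).length) :
    (pyramidWord s h)[i] = decide (i < s * h) := by
  by_cases hlt : i < s * h <;> simp [pyramidWord, List.getElem_append, hlt]

theorem count_false_pyramidWord (s h : ℕ) : (pyramidWord s h).count false = h := by
  simp [pyramidWord, List.count_replicate]

theorem pyramidWord_succ (s h : ℕ) :
    pyramidWord s (h + 1) = List.replicate s true ++ pyramidWord s h ++ [false] := by
  rw [pyramidWord, pyramidWord, mul_add_one, add_comm, List.replicate_add, List.replicate_succ']
  simp only [List.append_assoc]

/-- The path `w` has a pyramid of height at least one as a suffix. -/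
def EndsInPyramid (s : ℕ) (w : List Bool) : Prop :=
  ∃ h, 0 < h ∧ pyramidWord s h <:+ w

/-- The path `p` contains a pyramid of height `h ≥ 1` whose first down step is step `c`, so that
its up steps are the `s * h` steps before `c`. -/
structure IsPyramidAt (s : ℕ) (p : List Bool) (c h : ℕ) : Prop where
  pos : 0 < h
  le_peak : s * h ≤ c
  up : ∀ i, c ≤ i + s * h → i < c → p[i]? = some true
  down : ∀ i, c ≤ i → i < c + h → p[i]? = some false

/-- Step `j` of `p` is a down step of some pyramid. -/
def IsPyramidDownStep (s : ℕ) (p : List Bool) (j : ℕ) : Prop :=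
  ∃ c h, IsPyramidAt s p c h ∧ j ∈ Finset.Ico c (c + h)

namespace IsPyramidAt

variable {s c c' h h' j : ℕ} {p : List Bool}

theorem le_length (hp : IsPyramidAt s p c h) : c + h ≤ p.length := by
  have hpos := hp.pos
  obtain ⟨hlt, -⟩ := List.getElem?_eq_some_iff.1 (hp.down (c + h - 1) (by omega) (by omega))
  omega

theorem mono (hp : IsPyramidAt s p c h) (hpos : 0 < h') (hle : h' ≤ h) :
    IsPyramidAt s p c h' := by
  have hmul : s * h' ≤ s * h := Nat.mul_le_mul_left s hle
  exact ⟨hpos, hmul.trans hp.le_peak, fun i hi => hp.up i (by omega),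
    fun i hi hlt => hp.down i hi (by omega)⟩

theorem peak_le (hp : IsPyramidAt s p c h) (hc : c ≤ j + s * h) (hj : p[j]? = some false) :
    c ≤ j := by
  by_contra! hlt
  simpa [hj] using hp.up j hc hlt

theorem peak_unique (hs : 1 ≤ s) (hp : IsPyramidAt s p c h) (hp' : IsPyramidAt s p c' h')
    (hj : j ∈ Finset.Ico c (c + h)) (hj' : j ∈ Finset.Ico c' (c' + h')) : c = c' := by
  rw [Finset.mem_Ico] at hj hj'
  by_contra! hne
  wlog hlt : c < c' generalizing c c' h h'
  · exact this hp' hp hj' hj hne.symm (by omega)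
  have hpos : 0 < s * h' := Nat.mul_pos hs hp'.pos
  have hup := hp'.up (c' - 1) (by omega) (by omega)
  have hdown := hp.down (c' - 1) (by omega) (by omega)
  simp [hup] at hdown

theorem exists_maximal (hp : IsPyramidAt s p c h) :
    ∃ h', h ≤ h' ∧ IsPyramidAt s p c h' ∧ ¬ IsPyramidAt s p c (h' + 1) := by
  by_contra! hgrow
  have hall : ∀ k, IsPyramidAt s p c (h + k) := fun k => by
    induction k with
    | zero => exact hp
    | succ k ih => exact hgrow _ (Nat.le_add_right _ _) ih
  have := (hall p.length).le_length
  have := hp.pos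
  omega

theorem height_le_of_not_succ (hp : IsPyramidAt s p c h) (hmax : ¬ IsPyramidAt s p c (h' + 1)) :
    h ≤ h' := by
  by_contra! hlt
  exact hmax (hp.mono (Nat.succ_pos h') hlt)

end IsPyramidAt

theorem isPyramidAt_iff_suffix {s c h : ℕ} {p : List Bool} :
    IsPyramidAt s p c h ↔
      0 < h ∧ c + h ≤ p.length ∧ pyramidWord s h <:+ p.take (c + h) := by
  have hring : (s + 1) * h = s * h + h := by ring
  simp only [List.suffix_iff_getElem?, getElem_pyramidWord, length_pyramidWord, hring]
  constructor
  · intro hp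
    have hle := hp.le_length
    have hpeak := hp.le_peak
    refine ⟨hp.pos, hle, by grind, fun i hi => ?_⟩
    rw [List.length_take_of_le hle, List.getElem?_take_of_lt (by omega)]
    rcases lt_or_ge i (s * h) with hup | hdown
    · simpa [hup] using hp.up (i + (c + h) - (s * h + h)) (by omega) (by omega)
    · simpa [hdown.not_gt] using hp.down (i + (c + h) - (s * h + h)) (by omega) (by omega)
  · rintro ⟨hpos, hle, hlen, hget⟩
    rw [List.length_take_of_le hle] at hlen hget
    have hstep : ∀ i, c ≤ i + s * h → i < c + h → p[i]? = some (decide (i < c)) := by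
      intro i hi hlt
      have := hget (i + s * h - c) (by omega)
      rw [show i + s * h - c + (c + h) - (s * h + h) = i by omega,
        List.getElem?_take_of_lt hlt] at this
      rw [this, Option.some_inj, decide_eq_decide]
      omega
    exact ⟨hpos, by omega, fun i hi hlt => by rw [hstep i hi (by omega), decide_eq_true hlt],
      fun i hi hlt => by rw [hstep i (by omega) hlt, decide_eq_false hi.not_gt]⟩

theorem take_drop_eq_iff_suffix_take {α : Type*} {l p : List α} {a : ℕ}
    (hle : a + l.length ≤ p.length) :
    (p.drop a).take l.length = l ↔ l <:+ p.take (a + l.length) := by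
  rw [List.suffix_iff_eq_drop, List.length_take, min_eq_left hle, Nat.add_sub_cancel,
    List.drop_take, Nat.add_sub_cancel_left, eq_comm]

theorem isPyramidSecS_iff_take_drop {s a b : ℕ} {p : List Bool} :
    IsPyramidSecS s p a b ↔ ∃ h, 0 < h ∧ b + 1 = a + (s + 1) * h ∧ b < p.length ∧
      (p.drop a).take ((s + 1) * h) = pyramidWord s h := by
  constructor
  · rintro ⟨hab, hb, hlen, hword⟩
    generalize (b - a + 1) / (s + 1) = h at hlen hword
    have hpos : 0 < (s + 1) * h := by omega
    exact ⟨h, Nat.pos_of_mul_pos_left hpos, by omega, hb, by rwa [← hlen]⟩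
  · rintro ⟨h, hpos, hab, hb, hword⟩
    have hmul : 0 < (s + 1) * h := by positivity
    have hlen : b - a + 1 = (s + 1) * h := by omega
    rw [IsPyramidSecS, hlen, Nat.mul_div_cancel_left h s.succ_pos]
    exact ⟨by omega, hb, rfl, hword⟩

theorem isPyramidSecS_iff {s a b : ℕ} {p : List Bool} :
    IsPyramidSecS s p a b ↔ ∃ h, IsPyramidAt s p (a + s * h) h ∧ b + 1 = a + s * h + h := by
  rw [isPyramidSecS_iff_take_drop]
  refine exists_congr fun h => ?_
  have hlen : a + s * h + h = a + (pyramidWord s h).length := by rw [length_pyramidWord]; ring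
  rw [isPyramidAt_iff_suffix, hlen, ← length_pyramidWord]
  constructor
  · rintro ⟨hpos, hab, hb, hword⟩
    have hle : a + (pyramidWord s h).length ≤ p.length := by omega
    exact ⟨⟨hpos, hle, (take_drop_eq_iff_suffix_take hle).1 hword⟩, hab⟩
  · rintro ⟨⟨hpos, hle, hsuf⟩, hab⟩
    exact ⟨hpos, hab, by omega, (take_drop_eq_iff_suffix_take hle).2 hsuf⟩

theorem maximalPyramidSecS_iff {s a b : ℕ} {p : List Bool} :
    MaximalPyramidSecS s p a b ↔ ∃ h, IsPyramidAt s p (a + s * h) h ∧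
      ¬ IsPyramidAt s p (a + s * h) (h + 1) ∧ b + 1 = a + s * h + h := by
  rw [MaximalPyramidSecS, isPyramidSecS_iff, isPyramidSecS_iff]
  constructor
  · rintro ⟨⟨h, hp, hb⟩, hmax⟩
    refine ⟨h, hp, fun hp' => hmax ?_, hb⟩
    have hpeak := hp'.le_peak
    have hle := hp'.le_length
    rw [mul_add_one] at hpeak
    have hshift : a - s + s * (h + 1) = a + s * h := by rw [mul_add_one]; omega
    exact ⟨by omega, by omega, h + 1, by rwa [hshift], by omega⟩
  · rintro ⟨h, hp, hmax, hb⟩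
    refine ⟨⟨h, hp, hb⟩, ?_⟩
    rintro ⟨hsa, -, h', hp', hb'⟩
    obtain rfl : h' = h + 1 := by
      apply Nat.eq_of_mul_eq_mul_left s.succ_pos
      rw [Nat.succ_mul, Nat.succ_mul, mul_add_one]
      omega
    rw [show a - s + s * (h + 1) = a + s * h by rw [mul_add_one]; omega] at hp'
    exact hmax hp'

theorem isPyramidDownStep_iff_endsInPyramid {s j : ℕ} {p : List Bool} :
    IsPyramidDownStep s p j ↔ j < p.length ∧ EndsInPyramid s (p.take (j + 1)) := by
  constructor
  · rintro ⟨c, h, hp, hj⟩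
    obtain ⟨hcj, hjh⟩ := Finset.mem_Ico.1 hj
    have hp' := isPyramidAt_iff_suffix.1 (hp.mono (h' := j + 1 - c) (by omega) (by omega))
    rw [show c + (j + 1 - c) = j + 1 by omega] at hp'
    exact ⟨hp'.2.1, _, hp'.1, hp'.2.2⟩
  · rintro ⟨hj, h, hpos, hsuf⟩
    have hle := hsuf.length_le
    rw [length_pyramidWord, List.length_take_of_le hj, add_one_mul] at hle
    refine ⟨j + 1 - h, h, isPyramidAt_iff_suffix.2 ?_, Finset.mem_Ico.2 (by omega)⟩
    rw [Nat.sub_add_cancel (by omega)]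
    exact ⟨hpos, hj, hsuf⟩

theorem IsPyramidDownStep.getElem?_eq {s j : ℕ} {p : List Bool} (hj : IsPyramidDownStep s p j) :
    p[j]? = some false := by
  obtain ⟨c, h, hp, hmem⟩ := hj
  obtain ⟨hcj, hjh⟩ := Finset.mem_Ico.1 hmem
  exact hp.down j hcj hjh

theorem exists_isPyramidSecS_iff_isPyramidDownStep {s j : ℕ} {p : List Bool}
    (hj : p[j]? = some false) :
    (∃ a ∈ Finset.range p.length, ∃ b ∈ Finset.range p.length,
      a ≤ j ∧ j ≤ b ∧ IsPyramidSecS s p a b) ↔ IsPyramidDownStep s p j := by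
  constructor
  · rintro ⟨a, -, b, -, haj, hjb, hp⟩
    obtain ⟨h, hp, hb⟩ := isPyramidSecS_iff.1 hp
    have hpeak := hp.peak_le (by omega) hj
    exact ⟨_, h, hp, Finset.mem_Ico.2 ⟨hpeak, by omega⟩⟩
  · rintro ⟨c, h, hp, hmem⟩
    rw [Finset.mem_Ico] at hmem
    have hpos := hp.pos
    have hle := hp.le_length
    obtain ⟨a, rfl⟩ := Nat.exists_eq_add_of_le' hp.le_peak
    exact ⟨a, Finset.mem_range.2 (by omega), a + s * h + h - 1, Finset.mem_range.2 (by omega),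
      by omega, by omega, isPyramidSecS_iff.2 ⟨h, hp, by omega⟩⟩

/-- The positions of the down steps of the pyramid section from `q.1` to `q.2`: as many final
positions as its height. -/
def pyramidDownRun (s : ℕ) (q : ℕ × ℕ) : Finset ℕ :=
  Finset.Ico (q.2 + 1 - (q.2 - q.1 + 1) / (s + 1)) (q.2 + 1)

theorem pyramidDownRun_eq_Ico {s a b h : ℕ} (hpos : 0 < h) (hb : b + 1 = a + s * h + h) :
    pyramidDownRun s (a, b) = Finset.Ico (a + s * h) (a + s * h + h) := by
  have hlen : b - a + 1 = (s + 1) * h := by rw [add_one_mul]; omega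
  rw [pyramidDownRun, hlen, Nat.mul_div_cancel_left h s.succ_pos, hb, Nat.add_sub_cancel]

theorem card_pyramidDownRun (s : ℕ) (q : ℕ × ℕ) :
    (pyramidDownRun s q).card = (q.2 - q.1 + 1) / (s + 1) := by
  have hdiv := Nat.div_le_self (q.2 - q.1 + 1) (s + 1)
  rw [pyramidDownRun, Nat.card_Ico]
  generalize (q.2 - q.1 + 1) / (s + 1) = h at hdiv ⊢
  omega

theorem pairwiseDisjoint_pyramidDownRun {s : ℕ} (hs : 1 ≤ s) (p : List Bool) :
    {q : ℕ × ℕ | MaximalPyramidSecS s p q.1 q.2}.PairwiseDisjoint (pyramidDownRun s) := by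
  rintro ⟨a, b⟩ hq ⟨a', b'⟩ hq' hne
  obtain ⟨h, hp, hmax, hb⟩ := maximalPyramidSecS_iff.1 hq
  obtain ⟨h', hp', hmax', hb'⟩ := maximalPyramidSecS_iff.1 hq'
  refine Finset.disjoint_left.2 fun j hj hj' => hne ?_
  rw [pyramidDownRun_eq_Ico hp.pos hb] at hj
  rw [pyramidDownRun_eq_Ico hp'.pos hb'] at hj'
  have hpeak := hp.peak_unique hs hp' hj hj'
  rw [← hpeak] at hp' hmax'
  obtain rfl : h = h' :=
    (hp.height_le_of_not_succ hmax').antisymm (hp'.height_le_of_not_succ hmax)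
  exact Prod.ext (Nat.add_right_cancel hpeak) (show b = b' by omega)

theorem exists_maximal_mem_pyramidDownRun_iff {s j : ℕ} {p : List Bool} :
    (∃ a b, MaximalPyramidSecS s p a b ∧ j ∈ pyramidDownRun s (a, b)) ↔
      IsPyramidDownStep s p j := by
  constructor
  · rintro ⟨a, b, hmax, hj⟩
    obtain ⟨h, hp, -, hb⟩ := maximalPyramidSecS_iff.1 hmax
    exact ⟨_, h, hp, pyramidDownRun_eq_Ico hp.pos hb ▸ hj⟩
  · rintro ⟨c, h, hp, hj⟩
    obtain ⟨h', hle, hp', hmax⟩ := hp.exists_maximal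
    obtain ⟨a, rfl⟩ := Nat.exists_eq_add_of_le' hp'.le_peak
    have hpos := hp'.pos
    have hb : a + s * h' + h' - 1 + 1 = a + s * h' + h' := by omega
    refine ⟨a, a + s * h' + h' - 1, maximalPyramidSecS_iff.2 ⟨h', hp', hmax, hb⟩, ?_⟩
    rw [pyramidDownRun_eq_Ico hpos hb]
    exact Finset.Ico_subset_Ico_right (by omega) hj

open scoped Classical in
theorem pyramidWeightS_eq_card {s : ℕ} (hs : 1 ≤ s) (p : List Bool) :
    pyramidWeightS s p = ((Finset.range p.length).filter (IsPyramidDownStep s p)).card := by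
  rw [pyramidWeightS, Finset.sum_congr rfl fun q _ => (card_pyramidDownRun s q).symm,
    ← Finset.card_biUnion]
  · congr 1
    ext j
    simp only [Finset.mem_biUnion, Finset.mem_filter, Finset.mem_product, Finset.mem_range,
      Prod.exists, ← exists_maximal_mem_pyramidDownRun_iff]
    constructor
    · rintro ⟨a, b, ⟨⟨-, hb⟩, hmax⟩, hj⟩
      have hjb := (Finset.mem_Ico.1 hj).2
      exact ⟨by omega, a, b, hmax, hj⟩
    · rintro ⟨-, a, b, hmax, hj⟩
      have hb := hmax.1.2.1
      exact ⟨a, b, ⟨⟨hmax.1.1.trans_lt hb, hb⟩, hmax⟩, hj⟩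
  · exact (pairwiseDisjoint_pyramidDownRun hs p).subset fun q hq =>
      (Finset.mem_filter.1 hq).2

open scoped Classical in
theorem exteriorDownSteps_eq_card (s : ℕ) (p : List Bool) :
    exteriorDownSteps s p = ((Finset.range p.length).filter fun j =>
      p[j]? = some false ∧ ¬ IsPyramidDownStep s p j).card := by
  rw [exteriorDownSteps]
  congr 1
  refine Finset.filter_congr fun j _ => ?_
  have hdown : p.getD j true = false ↔ p[j]? = some false := by
    rw [List.getD_eq_getElem?_getD]
    cases p[j]? <;> simp
  rw [hdown]
  exact and_congr_right fun hj => not_congr (exists_isPyramidSecS_iff_isPyramidDownStep hj)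

theorem card_filter_getElem?_eq_some {α : Type*} [DecidableEq α] (p : List α) (x : α) :
    ((Finset.range p.length).filter fun j => p[j]? = some x).card = p.count x := by
  induction p using List.reverseRecOn with
  | nil => rfl
  | append_singleton p y ih =>
    have hinit : ∀ j ∈ Finset.range p.length, (p ++ [y])[j]? = p[j]? := fun j hj =>
      List.getElem?_append_left (Finset.mem_range.1 hj)
    rw [List.length_append, List.length_singleton, Finset.range_add_one, Finset.filter_insert,
      Finset.filter_congr fun j hj => by rw [hinit j hj], List.count_append, ← ih]
    by_cases hyx : y = x <;> simp [hyx]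

theorem exteriorDownSteps_add_pyramidWeightS {s : ℕ} (hs : 1 ≤ s) (p : List Bool) :
    exteriorDownSteps s p + pyramidWeightS s p = p.count false := by
  classical
  have hweight : pyramidWeightS s p = ((Finset.range p.length).filter fun j =>
      p[j]? = some false ∧ IsPyramidDownStep s p j).card := by
    rw [pyramidWeightS_eq_card hs]
    congr 1
    exact Finset.filter_congr fun j _ => (and_iff_right_of_imp (·.getElem?_eq)).symm
  rw [hweight, exteriorDownSteps_eq_card, ← Finset.filter_filter, ← Finset.filter_filter,
    add_comm, Finset.card_filter_add_card_filter_not, card_filter_getElem?_eq_some]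

/-- The word `w` codes a path that starts at height `0`, never passes below the x-axis and ends at
height `k`. -/
def IsNonnegWord (s k : ℕ) (w : List Bool) : Prop :=
  w.count true = s * w.count false + k ∧ ∀ u, u <+: w → s * u.count false ≤ u.count true

theorem isSAryPath_iff {s n : ℕ} {p : List Bool} :
    IsSAryPath s n p ↔ IsNonnegWord s 0 p ∧ p.count false = n := by
  have hlen : p.count true + p.count false = p.length := List.count_true_add_count_false p
  have hring : (s + 1) * n = s * n + n := by ring
  constructor
  · rintro ⟨hp, rfl, hnonneg⟩
    refine ⟨⟨by omega, fun u hu => ?_⟩, rfl⟩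
    rw [List.prefix_iff_eq_take.1 hu]
    exact hnonneg _
  · rintro ⟨⟨hend, hnonneg⟩, rfl⟩
    exact ⟨by omega, rfl, fun i => hnonneg _ (List.take_prefix i p)⟩

theorem isNonnegWord_nil_iff {s k : ℕ} : IsNonnegWord s k [] ↔ k = 0 := by
  simp [IsNonnegWord, eq_comm]

theorem isNonnegWord_concat_false_iff {s k : ℕ} {w : List Bool} :
    IsNonnegWord s k (w ++ [false]) ↔ IsNonnegWord s (k + s) w := by
  have htrue : (w ++ [false]).count true = w.count true := by simp
  have hfalse : s * (w ++ [false]).count false = s * w.count false + s := by simp [mul_add_one]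
  simp only [IsNonnegWord, List.prefix_concat_iff, forall_eq_or_imp, htrue, hfalse]
  constructor
  · rintro ⟨hend, -, hnonneg⟩
    exact ⟨by omega, hnonneg⟩
  · rintro ⟨hend, hnonneg⟩
    exact ⟨by omega, by omega, hnonneg⟩

theorem isNonnegWord_concat_true_iff {s k : ℕ} {w : List Bool} :
    IsNonnegWord s k (w ++ [true]) ↔ ∃ j, k = j + 1 ∧ IsNonnegWord s j w := by
  have htrue : (w ++ [true]).count true = w.count true + 1 := by simp
  have hfalse : (w ++ [true]).count false = w.count false := by simp
  simp only [IsNonnegWord, List.prefix_concat_iff, forall_eq_or_imp, htrue, hfalse]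
  constructor
  · rintro ⟨hend, -, hnonneg⟩
    have := hnonneg w List.prefix_rfl
    exact ⟨k - 1, by omega, by omega, hnonneg⟩
  · rintro ⟨j, rfl, hend, hnonneg⟩
    exact ⟨by omega, by omega, hnonneg⟩

theorem isNonnegWord_replicate_true (s m : ℕ) : IsNonnegWord s m (List.replicate m true) := by
  induction m with
  | zero => exact isNonnegWord_nil_iff.2 rfl
  | succ m ih =>
    rw [List.replicate_succ']
    exact isNonnegWord_concat_true_iff.2 ⟨m, rfl, ih⟩

namespace IsNonnegWord

variable {s i j k : ℕ} {u v w : List Bool}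

theorem exists_of_append_singleton {x : Bool} (hw : IsNonnegWord s k (w ++ [x])) :
    ∃ j, IsNonnegWord s j w := by
  cases x with
  | false => exact ⟨_, isNonnegWord_concat_false_iff.1 hw⟩
  | true => exact (isNonnegWord_concat_true_iff.1 hw).imp fun _ => And.right

theorem append (hv : IsNonnegWord s i v) (hw : IsNonnegWord s j w) :
    IsNonnegWord s (i + j) (v ++ w) := by
  induction w using List.reverseRecOn generalizing j with
  | nil =>
    obtain rfl := isNonnegWord_nil_iff.1 hw
    rwa [List.append_nil]
  | append_singleton w x ih =>
    rw [← List.append_assoc]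
    cases x with
    | false =>
      rw [isNonnegWord_concat_false_iff] at hw ⊢
      rw [add_assoc]
      exact ih hw
    | true =>
      obtain ⟨k, rfl, hw'⟩ := isNonnegWord_concat_true_iff.1 hw
      exact isNonnegWord_concat_true_iff.2 ⟨i + k, rfl, ih hw'⟩

theorem true_cons (hw : IsNonnegWord s j w) : IsNonnegWord s (j + 1) (true :: w) :=
  add_comm 1 j ▸ (isNonnegWord_replicate_true s 1).append hw

theorem component {t : ℕ} (hw : IsNonnegWord (t + 1) t w) :
    IsNonnegWord (t + 1) 0 (true :: w ++ [false]) :=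
  isNonnegWord_concat_false_iff.2 ((zero_add (t + 1)).symm ▸ hw.true_cons)

theorem exists_eq_append (hw : IsNonnegWord s (i + j + 1) w) :
    ∃ u v, IsNonnegWord s i u ∧ IsNonnegWord s j v ∧ u ++ true :: v = w := by
  induction w using List.reverseRecOn generalizing j with
  | nil => exact absurd (isNonnegWord_nil_iff.1 hw) (by omega)
  | append_singleton w x ih =>
    cases x with
    | false =>
      rw [isNonnegWord_concat_false_iff, show i + j + 1 + s = i + (j + s) + 1 by ring] at hw
      obtain ⟨u, v, hu, hv, rfl⟩ := ih hw
      exact ⟨u, v ++ [false], hu, isNonnegWord_concat_false_iff.2 hv, by simp⟩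
    | true =>
      obtain ⟨k, hk, hw⟩ := isNonnegWord_concat_true_iff.1 hw
      obtain rfl := Nat.succ_injective hk
      cases j with
      | zero => exact ⟨w, [], hw, isNonnegWord_nil_iff.2 rfl, rfl⟩
      | succ j =>
        obtain ⟨u, v, hu, hv, rfl⟩ := ih hw
        exact ⟨u, v ++ [true], hu, isNonnegWord_concat_true_iff.2 ⟨j, rfl, hv⟩, by simp⟩

theorem eq_nil_of_append_prefix (hu : IsNonnegWord s i u) (huw : IsNonnegWord s i (u ++ w))
    (hv : IsNonnegWord s j v) (hpre : w <+: true :: v) : w = [] := by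
  rcases List.prefix_cons_iff.1 hpre with rfl | ⟨c, rfl, hc⟩
  · rfl
  · have hcount := huw.1
    have hnonneg := hv.2 c hc
    simp only [List.count_append, List.count_cons_self, ne_eq, reduceCtorEq, not_false_eq_true,
      List.count_cons_of_ne, mul_add, hu.1] at hcount
    omega

theorem append_true_injective {u' v' : List Bool} (hu : IsNonnegWord s i u)
    (hv : IsNonnegWord s j v) (hu' : IsNonnegWord s i u') (hv' : IsNonnegWord s j v')
    (heq : u ++ true :: v = u' ++ true :: v') : u = u' ∧ v = v' := by
  rcases List.append_eq_append_iff.1 heq with ⟨c, rfl, hc⟩ | ⟨c, rfl, hc⟩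
  · obtain rfl := hu.eq_nil_of_append_prefix hu' hv ⟨_, hc.symm⟩
    simpa using hc
  · obtain rfl := hu'.eq_nil_of_append_prefix hu hv' ⟨_, hc.symm⟩
    simpa [eq_comm] using hc

theorem eq_of_suffix_pyramidWord {h : ℕ} (hs : 1 ≤ s) (hw : IsNonnegWord s k w) (hne : w ≠ [])
    (hsuf : w <:+ pyramidWord s h) : w = pyramidWord s h := by
  obtain ⟨u, hu⟩ := hsuf
  have hnonneg := hw.2 w List.prefix_rfl
  rcases List.append_eq_append_iff.1 hu with ⟨c, hup, rfl⟩ | ⟨c, rfl, hdown⟩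
  · have hlen : s * h = u.length + c.length := by simpa using congrArg List.length hup
    have hcount : c.count true ≤ c.length := List.count_le_length
    rw [List.count_append, List.count_append, List.count_replicate_self, List.count_replicate,
      if_neg (by decide), mul_add] at hnonneg
    have : u = [] := List.eq_nil_of_length_eq_zero (by omega)
    rw [← hu, this, List.nil_append]
  · obtain ⟨-, -, hwd⟩ := List.append_eq_replicate_iff.1 hdown.symm
    rw [hwd] at hnonneg
    have hpos : 0 < s * w.length := Nat.mul_pos hs (List.length_pos_iff.2 hne)
    rw [List.count_replicate_self, List.count_replicate, if_neg (by decide)] at hnonneg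
    omega

theorem endsInPyramid_append_iff (hs : 1 ≤ s) (hw : IsNonnegWord s k w) (hne : w ≠ []) :
    EndsInPyramid s (v ++ w) ↔ EndsInPyramid s w := by
  refine exists_congr fun h => and_congr_right fun _ =>
    ⟨fun hsuf => ?_, fun hsuf => hsuf.trans (List.suffix_append v w)⟩
  rcases List.suffix_or_suffix_of_suffix hsuf (List.suffix_append v w) with hsuf' | hsuf'
  · exact hsuf'
  · rw [← hw.eq_of_suffix_pyramidWord hs hne hsuf']

end IsNonnegWord

theorem isNonnegWord_pyramidWord (s h : ℕ) : IsNonnegWord s 0 (pyramidWord s h) := by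
  induction h with
  | zero => exact isNonnegWord_nil_iff.2 rfl
  | succ h ih =>
    rw [pyramidWord_succ, isNonnegWord_concat_false_iff, zero_add]
    exact (isNonnegWord_replicate_true s s).append ih

theorem exteriorDownSteps_nil (s : ℕ) : exteriorDownSteps s [] = 0 := rfl

open scoped Classical in
theorem exteriorDownSteps_concat (s : ℕ) (w : List Bool) (x : Bool) :
    exteriorDownSteps s (w ++ [x]) = exteriorDownSteps s w +
      if x = false ∧ ¬ EndsInPyramid s (w ++ [x]) then 1 else 0 := by
  have hinit : ∀ j ∈ Finset.range w.length,
      ((w ++ [x])[j]? = some false ∧ ¬ IsPyramidDownStep s (w ++ [x]) j) ↔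
        (w[j]? = some false ∧ ¬ IsPyramidDownStep s w j) := by
    intro j hj
    have hj : j < w.length := Finset.mem_range.1 hj
    have hj' : j < (w ++ [x]).length := by simp; omega
    rw [isPyramidDownStep_iff_endsInPyramid, isPyramidDownStep_iff_endsInPyramid,
      List.getElem?_append_left hj, List.take_append_of_le_length hj, and_iff_right hj,
      and_iff_right hj']
  have hlast : ((w ++ [x])[w.length]? = some false ∧
      ¬ IsPyramidDownStep s (w ++ [x]) w.length) ↔ x = false ∧ ¬ EndsInPyramid s (w ++ [x]) := by
    have htake : (w ++ [x]).take (w.length + 1) = w ++ [x] := List.take_of_length_le (by simp)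
    simp [isPyramidDownStep_iff_endsInPyramid, htake]
  rw [exteriorDownSteps_eq_card, exteriorDownSteps_eq_card, List.length_append,
    List.length_singleton, Finset.range_add_one, Finset.filter_insert,
    Finset.filter_congr hinit, if_congr hlast rfl rfl]
  split_ifs <;> simp

theorem exteriorDownSteps_append {s k : ℕ} {w : List Bool} (hs : 1 ≤ s) (v : List Bool)
    (hw : IsNonnegWord s k w) :
    exteriorDownSteps s (v ++ w) = exteriorDownSteps s v + exteriorDownSteps s w := by
  classical
  induction w using List.reverseRecOn generalizing k with
  | nil => rw [List.append_nil, exteriorDownSteps_nil, add_zero]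
  | append_singleton w x ih =>
    obtain ⟨j, hw'⟩ := hw.exists_of_append_singleton
    have hends := hw.endsInPyramid_append_iff (v := v) hs (List.concat_ne_nil x w)
    rw [← List.append_assoc, exteriorDownSteps_concat, exteriorDownSteps_concat, ih hw',
      List.append_assoc, if_congr (and_congr_right' (not_congr hends)) rfl rfl, add_assoc]

theorem exteriorDownSteps_replicate_true (s m : ℕ) :
    exteriorDownSteps s (List.replicate m true) = 0 := by
  classical
  induction m with
  | zero => exact exteriorDownSteps_nil s
  | succ m ih => rw [List.replicate_succ', exteriorDownSteps_concat, ih, if_neg (by simp)]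

theorem exteriorDownSteps_replicate_append_replicate {s m h : ℕ} (hm : s * h ≤ m) :
    exteriorDownSteps s (List.replicate m true ++ List.replicate h false) = 0 := by
  classical
  induction h with
  | zero => rw [List.replicate_zero, List.append_nil, exteriorDownSteps_replicate_true]
  | succ h ih =>
    have hends : EndsInPyramid s (List.replicate m true ++ List.replicate (h + 1) false) := by
      refine ⟨h + 1, h.succ_pos, List.replicate (m - s * (h + 1)) true, ?_⟩
      rw [pyramidWord, ← List.append_assoc, ← List.replicate_add, Nat.sub_add_cancel hm]
    rw [List.replicate_succ', ← List.append_assoc] at hends ⊢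
    rw [exteriorDownSteps_concat, if_neg fun hext => hext.2 hends,
      ih ((Nat.mul_le_mul_left s h.le_succ).trans hm)]

/-- The word `U^{sh + s - 1} D^h` with `s = t + 1`: a pyramid of height `h + 1` without its first
and last steps. -/
def innerPyramidWord (t h : ℕ) : List Bool :=
  List.replicate t true ++ pyramidWord (t + 1) h

theorem pyramidWord_succ_eq_innerPyramidWord (t h : ℕ) :
    pyramidWord (t + 1) (h + 1) = true :: innerPyramidWord t h ++ [false] := by
  rw [pyramidWord_succ, innerPyramidWord, List.replicate_succ, List.cons_append]

theorem count_false_innerPyramidWord (t h : ℕ) : (innerPyramidWord t h).count false = h := by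
  rw [innerPyramidWord, List.count_append, count_false_pyramidWord]
  simp [List.count_replicate]

theorem innerPyramidWord_injective (t : ℕ) : Function.Injective (innerPyramidWord t) :=
  Function.LeftInverse.injective (count_false_innerPyramidWord t)

theorem isNonnegWord_innerPyramidWord (t h : ℕ) : IsNonnegWord (t + 1) t (innerPyramidWord t h) :=
  (isNonnegWord_replicate_true (t + 1) t).append (isNonnegWord_pyramidWord (t + 1) h)

theorem exteriorDownSteps_innerPyramidWord (t h : ℕ) :
    exteriorDownSteps (t + 1) (innerPyramidWord t h) = 0 := by
  rw [innerPyramidWord, pyramidWord, ← List.append_assoc, ← List.replicate_add]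
  exact exteriorDownSteps_replicate_append_replicate (Nat.le_add_left _ t)

theorem IsNonnegWord.endsInPyramid_component_iff {t : ℕ} {w : List Bool}
    (hw : IsNonnegWord (t + 1) t w) :
    EndsInPyramid (t + 1) (true :: w ++ [false]) ↔ w ∈ Set.range (innerPyramidWord t) := by
  constructor
  · rintro ⟨h, hpos, u, hu⟩
    obtain ⟨h, rfl⟩ := Nat.exists_eq_succ_of_ne_zero hpos.ne'
    rw [Nat.succ_eq_add_one, pyramidWord_succ_eq_innerPyramidWord, ← List.append_assoc] at hu
    have hsplit := List.append_cancel_right hu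
    cases u with
    | nil => exact ⟨h, List.tail_eq_of_cons_eq hsplit⟩
    | cons x u =>
      obtain rfl : u ++ true :: innerPyramidWord t h = w := List.tail_eq_of_cons_eq hsplit
      have hend := hw.1
      have hnonneg := hw.2 u (List.prefix_append _ _)
      have hinner := (isNonnegWord_innerPyramidWord t h).1
      simp only [List.count_append, List.count_cons_self, ne_eq, reduceCtorEq, not_false_eq_true,
        List.count_cons_of_ne, mul_add, hinner] at hend
      omega
  · rintro ⟨h, rfl⟩
    exact ⟨h + 1, h.succ_pos, by rw [pyramidWord_succ_eq_innerPyramidWord]⟩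

open scoped Classical in
theorem IsNonnegWord.exteriorDownSteps_component {t : ℕ} {w : List Bool}
    (hw : IsNonnegWord (t + 1) t w) :
    exteriorDownSteps (t + 1) (true :: w ++ [false]) = exteriorDownSteps (t + 1) w +
      if w ∈ Set.range (innerPyramidWord t) then 0 else 1 := by
  have htrue : exteriorDownSteps (t + 1) (true :: w) = exteriorDownSteps (t + 1) w := by
    have hsplit := exteriorDownSteps_append (Nat.le_add_left 1 t) (List.replicate 1 true) hw
    rwa [exteriorDownSteps_replicate_true, zero_add] at hsplit
  rw [exteriorDownSteps_concat, htrue, hw.endsInPyramid_component_iff,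
    if_congr (and_iff_right rfl) rfl rfl, ite_not]

section WeightSeries

open MvPowerSeries

variable {R σ α β : Type*}

/-- The generating function of a class `A` of combinatorial objects with weights `ω`: the
coefficient at `d` counts the elements of `A` of weight `d` (and is `0` if there are infinitely
many). -/
noncomputable def weightSeries (R : Type*) [Semiring R] (ω : α → σ →₀ ℕ) (A : Set α) :
    MvPowerSeries σ R :=
  fun d => ({a ∈ A | ω a = d}.ncard : R)

/-- Only finitely many elements of the class `A` have a given weight, so that `weightSeries` counts
them honestly. -/
def HasFiniteFibersOn (ω : α → σ →₀ ℕ) (A : Set α) : Prop :=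
  ∀ d, {a ∈ A | ω a = d}.Finite

theorem HasFiniteFibersOn.mono {ω : α → σ →₀ ℕ} {A B : Set α} (hB : HasFiniteFibersOn ω B)
    (hAB : A ⊆ B) : HasFiniteFibersOn ω A :=
  fun d => (hB d).subset fun _ ha => ⟨hAB ha.1, ha.2⟩

section Semiring

variable [Semiring R]

theorem coeff_weightSeries (ω : α → σ →₀ ℕ) (A : Set α) (d : σ →₀ ℕ) :
    coeff d (weightSeries R ω A) = ({a ∈ A | ω a = d}.ncard : R) := rfl

theorem weightSeries_congr {ω ω' : α → σ →₀ ℕ} {A : Set α} (h : A.EqOn ω ω') :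
    weightSeries R ω A = weightSeries R ω' A := by
  ext d
  rw [coeff_weightSeries, coeff_weightSeries]
  congr 3
  ext a
  exact and_congr_right fun ha => by rw [h ha]

theorem weightSeries_image {ω : β → σ →₀ ℕ} {f : α → β} {A : Set α} (hf : A.InjOn f) :
    weightSeries R ω (f '' A) = weightSeries R (ω ∘ f) A := by
  ext d
  have himage : {b ∈ f '' A | ω b = d} = f '' {a ∈ A | (ω ∘ f) a = d} := by
    ext b
    constructor
    · rintro ⟨⟨a, ha, rfl⟩, hd⟩
      exact ⟨a, ⟨ha, hd⟩, rfl⟩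
    · rintro ⟨a, ⟨ha, hd⟩, rfl⟩
      exact ⟨⟨a, ha, rfl⟩, hd⟩
  rw [coeff_weightSeries, coeff_weightSeries, himage,
    (hf.mono fun _ ha => ha.1).ncard_image]

theorem weightSeries_union {ω : α → σ →₀ ℕ} {A B : Set α}
    (hfin : HasFiniteFibersOn ω (A ∪ B)) (hAB : Disjoint A B) :
    weightSeries R ω (A ∪ B) = weightSeries R ω A + weightSeries R ω B := by
  ext d
  have hunion : {a ∈ A ∪ B | ω a = d} = {a ∈ A | ω a = d} ∪ {a ∈ B | ω a = d} :=
    Set.union_inter_distrib_right A B {a | ω a = d}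
  rw [map_add, coeff_weightSeries, coeff_weightSeries, coeff_weightSeries, hunion,
    Set.ncard_union_eq (hAB.mono (fun _ ha => ha.1) fun _ ha => ha.1)
      (hfin.mono Set.subset_union_left d) (hfin.mono Set.subset_union_right d), Nat.cast_add]

theorem weightSeries_prod {ω : α → σ →₀ ℕ} {ω' : β → σ →₀ ℕ} {A : Set α} {B : Set β}
    (hA : HasFiniteFibersOn ω A) (hB : HasFiniteFibersOn ω' B) :
    weightSeries R (fun q : α × β => ω q.1 + ω' q.2) (A ×ˢ B) =
      weightSeries R ω A * weightSeries R ω' B := by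
  classical
  ext d
  have hfibers : {q ∈ A ×ˢ B | ω q.1 + ω' q.2 = d} =
      ⋃ c ∈ (↑(Finset.HasAntidiagonal.antidiagonal d) : Set ((σ →₀ ℕ) × (σ →₀ ℕ))),
        {a ∈ A | ω a = c.1} ×ˢ {b ∈ B | ω' b = c.2} := by
    ext ⟨a, b⟩
    simp only [Set.mem_ofPred_eq, Set.mem_prod, Set.mem_iUnion, Prod.exists, exists_prop,
      SetLike.mem_coe, Finset.HasAntidiagonal.mem_antidiagonal]
    grind
  have hdisj : Set.PairwiseDisjoint ↑(Finset.HasAntidiagonal.antidiagonal d)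
      fun (c : (σ →₀ ℕ) × (σ →₀ ℕ)) => {a ∈ A | ω a = c.1} ×ˢ {b ∈ B | ω' b = c.2} := by
    rintro c - c' - hne
    refine Set.disjoint_left.2 fun q hq hq' => hne ?_
    exact Prod.ext (hq.1.2.symm.trans hq'.1.2) (hq.2.2.symm.trans hq'.2.2)
  rw [coeff_mul, coeff_weightSeries, hfibers,
    (Finset.finite_toSet _).ncard_biUnion (fun c _ => (hA c.1).prod (hB c.2)) hdisj,
    finsum_mem_coe_finset, Nat.cast_sum]
  simp only [Set.ncard_prod, Nat.cast_mul, coeff_weightSeries]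

theorem weightSeries_image2 {γ : Type*} {ω : α → σ →₀ ℕ} {ω' : β → σ →₀ ℕ} {ω'' : γ → σ →₀ ℕ}
    {f : α → β → γ} {A : Set α} {B : Set β} (hA : HasFiniteFibersOn ω A)
    (hB : HasFiniteFibersOn ω' B) (hf : (A ×ˢ B).InjOn (Function.uncurry f))
    (hω : ∀ a ∈ A, ∀ b ∈ B, ω'' (f a b) = ω a + ω' b) :
    weightSeries R ω'' (Set.image2 f A B) = weightSeries R ω A * weightSeries R ω' B := by
  rw [← Set.image_uncurry_prod, weightSeries_image hf, ← weightSeries_prod hA hB]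
  exact weightSeries_congr fun q hq => hω q.1 hq.1 q.2 hq.2

theorem weightSeries_singleton (ω : α → σ →₀ ℕ) (a : α) :
    weightSeries R ω {a} = monomial (ω a) 1 := by
  classical
  ext d
  rw [coeff_weightSeries, coeff_monomial]
  split_ifs with hd
  · have hfiber : {b ∈ ({a} : Set α) | ω b = d} = {a} :=
      Set.sep_eq_self_iff_mem_true.2 (by rintro b rfl; exact hd.symm)
    rw [hfiber, Set.ncard_singleton, Nat.cast_one]
  · have hfiber : {b ∈ ({a} : Set α) | ω b = d} = ∅ :=
      Set.sep_eq_empty_iff_mem_false.2 (by rintro b rfl; exact fun hb => hd hb.symm)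
    rw [hfiber, Set.ncard_empty, Nat.cast_zero]

theorem weightSeries_const_add (c : σ →₀ ℕ) (ω : α → σ →₀ ℕ) (A : Set α) :
    weightSeries R (fun a => c + ω a) A = monomial c 1 * weightSeries R ω A := by
  classical
  ext d
  rw [coeff_weightSeries, coeff_monomial_mul]
  split_ifs with hd
  · rw [one_mul, coeff_weightSeries]
    congr 3
    ext a
    exact and_congr_right fun _ => by rw [eq_tsub_iff_add_eq_of_le hd, add_comm]
  · have hfiber : {a ∈ A | c + ω a = d} = ∅ :=
      Set.sep_eq_empty_iff_mem_false.2 fun a _ ha => hd (ha ▸ le_self_add)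
    rw [hfiber, Set.ncard_empty, Nat.cast_zero]

end Semiring

theorem hasFiniteFibersOn_single (i : σ) (A : Set ℕ) :
    HasFiniteFibersOn (fun n => Finsupp.single i n) A := fun _ =>
  Set.Subsingleton.finite fun _ hm _ hn => Finsupp.single_injective i (hm.2.trans hn.2.symm)

theorem one_sub_X_mul_weightSeries_single [Ring R] (i : σ) :
    (1 - X i) * weightSeries R (fun n : ℕ => Finsupp.single i n) Set.univ = 1 := by
  have huniv : (Set.univ : Set ℕ) = {0} ∪ Nat.succ '' Set.univ := by
    rw [Set.image_univ, Nat.zero_union_range_succ]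
  have hsucc : (fun n : ℕ => Finsupp.single i n) ∘ Nat.succ =
      fun n => Finsupp.single i 1 + Finsupp.single i n := by
    funext n
    rw [Function.comp_apply, ← Finsupp.single_add, add_comm]
  have hrec : weightSeries R (fun n : ℕ => Finsupp.single i n) Set.univ =
      1 + X i * weightSeries R (fun n : ℕ => Finsupp.single i n) Set.univ := by
    conv_lhs => rw [huniv]
    rw [weightSeries_union (hasFiniteFibersOn_single i _) (by simp), weightSeries_singleton,
      weightSeries_image Nat.succ_injective.injOn, hsucc, weightSeries_const_add,
      Finsupp.single_zero, monomial_zero_one, X]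
  rw [sub_mul, one_mul, sub_eq_iff_eq_add]
  exact hrec

theorem weightSeries_single (K : Type*) [Field K] (i : σ) :
    weightSeries K (fun n : ℕ => Finsupp.single i n) Set.univ = (1 - X i)⁻¹ :=
  (MvPowerSeries.eq_inv_iff_mul_eq_one (by simp)).2
    (by rw [mul_comm, one_sub_X_mul_weightSeries_single])

end WeightSeries

section GeneratingFunction

open MvPowerSeries

/-- The weight of a word: the exponent of `x` counts the down steps and the exponent of `y` the
exterior down steps. -/
noncomputable def wordWeight (s : ℕ) (w : List Bool) : Fin 2 →₀ ℕ :=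
  Finsupp.single 0 (w.count false) + Finsupp.single 1 (exteriorDownSteps s w)

theorem wordWeight_eq_iff {s : ℕ} {w : List Bool} {d : Fin 2 →₀ ℕ} :
    wordWeight s w = d ↔ w.count false = d 0 ∧ exteriorDownSteps s w = d 1 := by
  simp [wordWeight, Finsupp.ext_iff, Fin.forall_fin_two]

theorem wordWeight_append {s k : ℕ} {w : List Bool} (hs : 1 ≤ s) (v : List Bool)
    (hw : IsNonnegWord s k w) : wordWeight s (v ++ w) = wordWeight s v + wordWeight s w := by
  simp only [wordWeight, exteriorDownSteps_append hs v hw, List.count_append, Finsupp.single_add]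
  abel

theorem wordWeight_replicate_true (s m : ℕ) : wordWeight s (List.replicate m true) = 0 :=
  wordWeight_eq_iff.2 ⟨by simp [List.count_replicate], exteriorDownSteps_replicate_true s m⟩

theorem wordWeight_append_true_append {s j : ℕ} {v : List Bool} (hs : 1 ≤ s) (u : List Bool)
    (hv : IsNonnegWord s j v) :
    wordWeight s (u ++ true :: v) = wordWeight s u + wordWeight s v := by
  have htrue := wordWeight_append hs (List.replicate 1 true) hv
  rw [wordWeight_replicate_true, zero_add] at htrue
  rw [wordWeight_append hs u hv.true_cons]
  exact congrArg _ htrue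

theorem wordWeight_innerPyramidWord (t h : ℕ) :
    wordWeight (t + 1) (innerPyramidWord t h) = Finsupp.single 0 h := by
  rw [wordWeight, count_false_innerPyramidWord, exteriorDownSteps_innerPyramidWord,
    Finsupp.single_zero, add_zero]

open scoped Classical in
theorem wordWeight_component {t : ℕ} {w : List Bool} (hw : IsNonnegWord (t + 1) t w) :
    wordWeight (t + 1) (true :: w ++ [false]) = Finsupp.single 0 1 + (wordWeight (t + 1) w +
      Finsupp.single 1 (if w ∈ Set.range (innerPyramidWord t) then 0 else 1)) := by
  have hcount : (true :: w ++ [false]).count false = 1 + w.count false := by simp [add_comm]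
  rw [wordWeight, hw.exteriorDownSteps_component, hcount, wordWeight, Finsupp.single_add,
    Finsupp.single_add, add_assoc, add_assoc]

theorem hasFiniteFibersOn_wordWeight (s k : ℕ) :
    HasFiniteFibersOn (wordWeight s) {w | IsNonnegWord s k w} := by
  refine fun d => (List.finite_length_eq Bool (s * d 0 + k + d 0)).subset ?_
  rintro w ⟨hw, rfl⟩
  have hcount : w.count false = wordWeight s w 0 := (wordWeight_eq_iff.1 rfl).1
  rw [Set.mem_ofPred_eq, ← hcount, ← hw.1, List.count_true_add_count_false]

/-- The generating function of the words that stay nonnegative and end at height `k`, by down steps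
and exterior down steps. -/
noncomputable def nonnegWordSeries (s k : ℕ) : MvPowerSeries (Fin 2) ℚ :=
  weightSeries ℚ (wordWeight s) {w | IsNonnegWord s k w}

theorem Es_eq_nonnegWordSeries (s : ℕ) : Es s = nonnegWordSeries s 0 := by
  funext d
  have hset : {p | IsSAryPath s (d 0) p ∧ exteriorDownSteps s p = d 1} =
      {w ∈ {w | IsNonnegWord s 0 w} | wordWeight s w = d} := by
    ext w
    simp only [Set.mem_ofPred_eq, isSAryPath_iff, wordWeight_eq_iff, and_assoc]
  exact congrArg (fun A : Set (List Bool) => (A.ncard : ℚ)) hset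

theorem nonnegWordSeries_mul {s : ℕ} (hs : 1 ≤ s) (i j : ℕ) :
    nonnegWordSeries s i * nonnegWordSeries s j = nonnegWordSeries s (i + j + 1) := by
  have hsplit : {w | IsNonnegWord s (i + j + 1) w} =
      Set.image2 (fun u v => u ++ true :: v) {u | IsNonnegWord s i u} {v | IsNonnegWord s j v} := by
    ext w
    constructor
    · intro hw
      obtain ⟨u, v, hu, hv, huv⟩ := IsNonnegWord.exists_eq_append hw
      exact ⟨u, hu, v, hv, huv⟩
    · rintro ⟨u, hu, v, hv, rfl⟩
      rw [Set.mem_ofPred_eq, add_assoc]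
      exact IsNonnegWord.append hu (IsNonnegWord.true_cons hv)
  rw [nonnegWordSeries, nonnegWordSeries, nonnegWordSeries, hsplit]
  refine (weightSeries_image2 (hasFiniteFibersOn_wordWeight s i) (hasFiniteFibersOn_wordWeight s j)
    ?_ fun u _ v hv => wordWeight_append_true_append hs u hv).symm
  rintro ⟨u, v⟩ ⟨hu, hv⟩ ⟨u', v'⟩ ⟨hu', hv'⟩ heq
  exact Prod.ext_iff.2 (IsNonnegWord.append_true_injective hu hv hu' hv' heq)

theorem nonnegWordSeries_eq_pow {s : ℕ} (hs : 1 ≤ s) (k : ℕ) :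
    nonnegWordSeries s k = Es s ^ (k + 1) := by
  induction k with
  | zero => rw [zero_add, pow_one, Es_eq_nonnegWordSeries]
  | succ k ih =>
    rw [pow_succ, ← ih, Es_eq_nonnegWordSeries, nonnegWordSeries_mul hs, add_zero]

/-- The prime components `U v D`: the nonempty paths that return to the x-axis only at their end,
where `s = t + 1`. -/
def primeComponents (t : ℕ) : Set (List Bool) :=
  (fun v => true :: v ++ [false]) '' {v | IsNonnegWord (t + 1) t v}

theorem component_injective : Function.Injective fun v : List Bool => true :: v ++ [false] :=
  (List.append_left_injective [false]).comp List.cons_injective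

theorem primeComponents_subset (t : ℕ) : primeComponents t ⊆ {w | IsNonnegWord (t + 1) 0 w} := by
  rintro _ ⟨v, hv, rfl⟩
  exact IsNonnegWord.component hv

theorem setOf_isNonnegWord_zero_eq (t : ℕ) :
    {w | IsNonnegWord (t + 1) 0 w} =
      {[]} ∪ Set.image2 (· ++ ·) {u | IsNonnegWord (t + 1) 0 u} (primeComponents t) := by
  ext w
  constructor
  · intro hw
    rcases List.eq_nil_or_concat' w with rfl | ⟨w, x, rfl⟩
    · exact Or.inl rfl
    · cases x with
      | false =>
        have hw' : IsNonnegWord (t + 1) (0 + t + 1) w := by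
          simpa [add_assoc] using isNonnegWord_concat_false_iff.1 hw
        obtain ⟨u, v, hu, hv, rfl⟩ := hw'.exists_eq_append
        exact Or.inr ⟨u, hu, _, ⟨v, hv, rfl⟩, by simp⟩
      | true =>
        obtain ⟨j, hj, -⟩ := isNonnegWord_concat_true_iff.1 hw
        exact absurd hj (Nat.succ_ne_zero j).symm
  · rintro (rfl | ⟨u, hu, w, hw, rfl⟩)
    · exact isNonnegWord_nil_iff.2 rfl
    · exact IsNonnegWord.append hu (primeComponents_subset t hw)

theorem injOn_append_primeComponents (t : ℕ) :
    ({u | IsNonnegWord (t + 1) 0 u} ×ˢ primeComponents t).InjOn (Function.uncurry (· ++ ·)) := by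
  rintro ⟨u, _⟩ ⟨hu, v, hv, rfl⟩ ⟨u', _⟩ ⟨hu', v', hv', rfl⟩ heq
  have hcancel : u ++ true :: v = u' ++ true :: v' :=
    List.append_cancel_right (bs := [false]) (by simpa using heq)
  obtain ⟨rfl, rfl⟩ := IsNonnegWord.append_true_injective hu hv hu' hv' hcancel
  rfl

theorem Es_eq_one_add_mul_primeComponents (t : ℕ) :
    Es (t + 1) = 1 + Es (t + 1) * weightSeries ℚ (wordWeight (t + 1)) (primeComponents t) := by
  have hfin := hasFiniteFibersOn_wordWeight (t + 1) 0
  have hdisj : Disjoint {[]}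
      (Set.image2 (· ++ ·) {u | IsNonnegWord (t + 1) 0 u} (primeComponents t)) := by
    rw [Set.disjoint_singleton_left]
    rintro ⟨u, -, _, ⟨v, -, rfl⟩, hnil⟩
    simp at hnil
  have hsplit := setOf_isNonnegWord_zero_eq t
  conv_lhs => rw [Es_eq_nonnegWordSeries, nonnegWordSeries, hsplit]
  rw [weightSeries_union (hsplit ▸ hfin) hdisj, weightSeries_singleton,
    weightSeries_image2 hfin (hfin.mono (primeComponents_subset t))
      (injOn_append_primeComponents t) fun u _ w hw =>
        wordWeight_append (Nat.le_add_left 1 t) u (primeComponents_subset t hw),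
    ← nonnegWordSeries, ← Es_eq_nonnegWordSeries,
    show wordWeight (t + 1) [] = 0 from wordWeight_replicate_true (t + 1) 0, monomial_zero_one]

theorem weightSeries_range_innerPyramidWord (t : ℕ) :
    weightSeries ℚ (wordWeight (t + 1)) (Set.range (innerPyramidWord t)) = (1 - X 0)⁻¹ := by
  have hweight : wordWeight (t + 1) ∘ innerPyramidWord t = fun h => Finsupp.single 0 h :=
    funext (wordWeight_innerPyramidWord t)
  rw [← Set.image_univ, weightSeries_image (innerPyramidWord_injective t).injOn, hweight,
    weightSeries_single]

theorem weightSeries_image_component {t : ℕ} {A : Set (List Bool)} (c : Fin 2 →₀ ℕ)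
    (hA : ∀ w ∈ A, wordWeight (t + 1) (true :: w ++ [false]) = c + wordWeight (t + 1) w) :
    weightSeries ℚ (wordWeight (t + 1)) ((fun v => true :: v ++ [false]) '' A) =
      monomial c 1 * weightSeries ℚ (wordWeight (t + 1)) A := by
  rw [weightSeries_image component_injective.injOn, ← weightSeries_const_add]
  exact weightSeries_congr hA

theorem weightSeries_primeComponents (t : ℕ) :
    weightSeries ℚ (wordWeight (t + 1)) (primeComponents t) =
      X 0 * (X 1 * Es (t + 1) ^ (t + 1) + (1 - X 1) * (1 - X 0)⁻¹) := by
  set inner := Set.range (innerPyramidWord t)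
  set outer := {w | IsNonnegWord (t + 1) t w} \ inner
  have hunion : inner ∪ outer = {w | IsNonnegWord (t + 1) t w} :=
    Set.union_sdiff_cancel (Set.range_subset_iff.2 (isNonnegWord_innerPyramidWord t))
  have hdisj : Disjoint inner outer := Set.disjoint_sdiff_right
  have houter : (1 - X 0)⁻¹ + weightSeries ℚ (wordWeight (t + 1)) outer =
      Es (t + 1) ^ (t + 1) := by
    rw [← nonnegWordSeries_eq_pow (Nat.le_add_left 1 t), nonnegWordSeries, ← hunion,
      weightSeries_union (hunion ▸ hasFiniteFibersOn_wordWeight (t + 1) t) hdisj,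
      weightSeries_range_innerPyramidWord]
  have hcomp : primeComponents t = (fun v => true :: v ++ [false]) '' inner ∪
      (fun v => true :: v ++ [false]) '' outer := by
    rw [primeComponents, ← hunion, Set.image_union]
  have hfin := (hasFiniteFibersOn_wordWeight (t + 1) 0).mono (primeComponents_subset t)
  have hcompInner : weightSeries ℚ (wordWeight (t + 1)) ((fun v => true :: v ++ [false]) '' inner) =
      X 0 * (1 - X 0)⁻¹ := by
    rw [weightSeries_image_component (Finsupp.single 0 1) fun w hw => ?_,
      weightSeries_range_innerPyramidWord, X]
    obtain ⟨h, rfl⟩ := hw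
    rw [wordWeight_component (isNonnegWord_innerPyramidWord t h), if_pos (Set.mem_range_self h),
      Finsupp.single_zero, add_zero]
  have hcompOuter : weightSeries ℚ (wordWeight (t + 1)) ((fun v => true :: v ++ [false]) '' outer) =
      X 0 * X 1 * weightSeries ℚ (wordWeight (t + 1)) outer := by
    rw [X, X, monomial_mul_monomial, one_mul]
    refine weightSeries_image_component _ fun w hw => ?_
    rw [wordWeight_component hw.1, if_neg hw.2, add_comm (wordWeight _ w), ← add_assoc]
  rw [hcomp, weightSeries_union (hcomp ▸ hfin)
    ((Set.disjoint_image_iff component_injective).2 hdisj), hcompInner, hcompOuter]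
  linear_combination X 0 * X 1 * houter

end GeneratingFunction

open MvPowerSeries in
/-- For `s ≥ 1`, `E` satisfies `E = 1 + x·(y·E^s + (1-y)/(1-x))·E`.
Moreover `E(x,y) = P(x·y, y⁻¹)`, i.e. coefficientwise `e_{n,k} = p_{n,n-k}` for
`k ≤ n` (an `s`-ary path of length `n` with pyramid weight `k` has `n-k` exterior
down steps). -/
theorem Es_equation (s : ℕ) (hs : 1 ≤ s) :
    (Es s = 1 + (X 0 : MvPowerSeries (Fin 2) ℚ) *
      ((X 1) * (Es s) ^ s + (1 - X 1) * (1 - X 0)⁻¹) * Es s) ∧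
    ∀ n k : ℕ, k ≤ n →
      Nat.card {p : List Bool // IsSAryPath s n p ∧ exteriorDownSteps s p = k} =
        Nat.card {p : List Bool // IsSAryPath s n p ∧ pyramidWeightS s p = n - k} := by
  refine ⟨?_, fun n k hk => Nat.card_congr (Equiv.subtypeEquivRight fun p => ?_)⟩
  · obtain ⟨t, rfl⟩ := Nat.exists_eq_add_of_le' hs
    conv_lhs => rw [Es_eq_one_add_mul_primeComponents, weightSeries_primeComponents, mul_comm]
  · refine and_congr_right fun hp => ?_
    have hsum := exteriorDownSteps_add_pyramidWeightS hs p
    have hlen := hp.2.1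
    omega
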